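/- Let P ∈ [0,1]^{n×m} be monotone, i.e., P_{ij} ≥ P_{i'j'} whenever i ≤ i' and j ≤ j'. Let i* be a maximizer of i ↦ i · P_{ii} over i ∈ [min{n,m}]. Then for every pair (i,j) with i ≤ i* and j ≤ i*, the index i* is a maximizer of the map k ↦ k · min{ P_{max{i,k},k}, P_{k,max{j,k}} } over k ∈ [min{n,m}]; that is, k*(i,j) = i*. -/

import Mathlib

/-- For a monotone probability matrix `P` (indexed by `[1..n] × [1..m]`,
with `P i j ≥ P i' j'` whenever `i ≤ i'` and `j ≤ j'`), if `i*` maximizes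
`i ↦ i ⬝ P i i` over `[min{n,m}]`, then for every `(i,j)` with `i ≤ i*` and `j ≤ i*`,
the index `i*` maximizes `k ↦ k ⬝ min {P (max i k) k, P k (max j k)}` over `[min{n,m}]`;
that is, `k*(i,j) = i*`. -/
theorem stmt_4 (n m : ℕ) (P : ℕ → ℕ → ℝ)
    (hP : ∀ i j, 1 ≤ i → i ≤ n → 1 ≤ j → j ≤ m → P i j ∈ Set.Icc (0 : ℝ) 1)
    (hmono : ∀ i i' j j', 1 ≤ i → i ≤ i' → i' ≤ n → 1 ≤ j → j ≤ j' → j' ≤ m →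
      P i' j' ≤ P i j)
    (istar : ℕ) (histar1 : 1 ≤ istar) (histar2 : istar ≤ min n m)
    (hmax : ∀ k, 1 ≤ k → k ≤ min n m →
      (k : ℝ) * P k k ≤ (istar : ℝ) * P istar istar)
    (i j : ℕ) (hi1 : 1 ≤ i) (hi : i ≤ istar) (hj1 : 1 ≤ j) (hj : j ≤ istar) :
    ∀ k, 1 ≤ k → k ≤ min n m →
      (k : ℝ) * min (P (max i k) k) (P k (max j k)) ≤
        (istar : ℝ) * min (P (max i istar) istar) (P istar (max j istar)) := by
  intro k hk1 hk2
  rw [max_eq_right hi, max_eq_right hj, min_self]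
  refine le_trans ?_ (hmax k hk1 hk2)
  have h1 : P (max i k) k ≤ P k k := by
    apply hmono <;> omega
  exact mul_le_mul_of_nonneg_left (le_trans (min_le_left _ _) h1) (Nat.cast_nonneg k)
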